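/- arXiv:1809.09432 — 2 statements merged into one kernel-verified Lean document; each statement's English description precedes it below -/
import Mathlib

section
/- Let k ∈ ℂ with k ≠ −2, and let V carry a smooth sl₂-current representation of level k with Sugawara operators L_n. Then the L_n satisfy the Virasoro relations with central charge c = 3k/(k+2): for all integers m, n, [L_m, L_n] = (m − n) L_{m+n} + ((m³ − m)/12) δ_{m+n,0} (3k/(k+2)) · Id as operators on V. -/
/-!
The proof runs the classical Sugawara computation with finite sums on each vector.

By smoothness, `Σ_m :X_a(m) X_a(n-m):` has finitely many nonzero terms on a given vector, so a
commutator with it is the sum of the commutators of its terms. Normal ordering changes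
`Σ_a X_a(p) X_a(n-p)` by a scalar only, hence each such commutator can be computed from the
unordered products by the same formula for every `p`. The unordered products vanish on `v` for
`p` near `-∞` but in general not near `+∞`, and the anomalies measure this failure.

* For `[2(k+2) L_n, Y(l)]` the terms are `g p - g (p + l)` plus a central contribution
  `-2 l k Y(n+l)`, where `g p = Σ_a X_a(p) [X_a, Y](n+l-p)`. On `v`, `g` goes from `0` to
  `Σ_a [X_a, [X_a, Y]](n+l) = 4 Y(n+l)`, so telescoping contributes `-4 l Y(n+l)` and
  `[L_n, Y(l)] = -l Y(n+l)` (`commutator_sugawara_cur`).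
* By the derivation rule, the terms of `[L_m, 2(k+2) L_n]` are
  `-p G(m+p) + (p-n) G(p)` with `G p = Σ_a X_a(p) X_a(m+n-p)`. Replacing `G` by its normally
  ordered version, the operator part sums to `(m-n) 2(k+2) L_{m+n}`, and for `m + n = 0` there
  remains `3k` times the scalar sum `(m³-m)/6` of `finsum_anomaly`
  (`commutator_sugawara_sum`).
-/

open LieAlgebra.SpecialLinear

noncomputable section

/-- The standard basis element `E` of sl₂(ℂ). -/
def matE : ↥(sl (Fin 2) ℂ) :=
  ⟨!![0, 1; 0, 0], by show _ ∈ LinearMap.ker (Matrix.traceLinearMap (Fin 2) ℂ ℂ); simp [Matrix.trace_fin_two]⟩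

/-- The standard basis element `H` of sl₂(ℂ). -/
def matH : ↥(sl (Fin 2) ℂ) :=
  ⟨!![1, 0; 0, -1], by show _ ∈ LinearMap.ker (Matrix.traceLinearMap (Fin 2) ℂ ℂ); simp [Matrix.trace_fin_two]⟩

/-- The standard basis element `F` of sl₂(ℂ). -/
def matF : ↥(sl (Fin 2) ℂ) :=
  ⟨!![0, 0; 1, 0], by show _ ∈ LinearMap.ker (Matrix.traceLinearMap (Fin 2) ℂ ℂ); simp [Matrix.trace_fin_two]⟩

/-- The invariant bilinear form `(X|Y) = Tr(XY)` on sl₂(ℂ). -/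
def trForm (A B : ↥(sl (Fin 2) ℂ)) : ℂ :=
  Matrix.trace ((A : Matrix (Fin 2) (Fin 2) ℂ) * (B : Matrix (Fin 2) (Fin 2) ℂ))

/-- A smooth sl₂-current representation of level `k` on a complex vector space `V`:
operators `cur X n` for `X ∈ sl₂(ℂ)`, `n ∈ ℤ`, linear in `X`, satisfying
`[X(m), Y(n)] = [X,Y](m+n) + m (X|Y) δ_{m+n,0} k·Id`, and smooth (every vector is
annihilated by all currents of sufficiently large mode). -/
structure SmoothCurrentRep (k : ℂ) (V : Type*) [AddCommGroup V] [Module ℂ V] where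
  cur : ↥(sl (Fin 2) ℂ) → ℤ → Module.End ℂ V
  cur_add : ∀ (A B : ↥(sl (Fin 2) ℂ)) (n : ℤ), cur (A + B) n = cur A n + cur B n
  cur_smul : ∀ (c : ℂ) (A : ↥(sl (Fin 2) ℂ)) (n : ℤ), cur (c • A) n = c • cur A n
  commutator : ∀ (A B : ↥(sl (Fin 2) ℂ)) (m n : ℤ),
    ⁅cur A m, cur B n⁆ = cur ⁅A, B⁆ (m + n)
      + (if m + n = 0 then (m : ℂ) * trForm A B * k else 0) • (1 : Module.End ℂ V)
  smooth : ∀ v : V, ∃ N : ℤ, ∀ (A : ↥(sl (Fin 2) ℂ)) (n : ℤ), N ≤ n → cur A n v = 0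

/-- The orthonormal basis `X₁ = H/√2`, `X₂ = (E+F)/√2`, `X₃ = i(E−F)/√2`
of sl₂(ℂ) with respect to the trace form. -/
def onb : Fin 3 → ↥(sl (Fin 2) ℂ) :=
  ![((Real.sqrt 2 : ℂ))⁻¹ • matH,
    ((Real.sqrt 2 : ℂ))⁻¹ • (matE + matF),
    (Complex.I * ((Real.sqrt 2 : ℂ))⁻¹) • (matE - matF)]

/-- The normal-ordered product `:X(m) X(l):` of two current operators. -/
def nOrd {V : Type*} [AddCommGroup V] [Module ℂ V]
    (cur : ↥(sl (Fin 2) ℂ) → ℤ → Module.End ℂ V)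
    (A : ↥(sl (Fin 2) ℂ)) (m l : ℤ) : Module.End ℂ V :=
  if m < 0 then cur A m * cur A l else cur A l * cur A m

/-- `L` is the family of Sugawara operators of a level-`k` current family `cur`:
`L n = (1/(2(k+2))) Σ_{a=1}^{3} Σ_{m∈ℤ} :X_a(m) X_a(n−m):`, where for each vector
the (finitely supported) sum over `m ∈ ℤ` is taken as a `finsum`. -/
def IsSugawara {V : Type*} [AddCommGroup V] [Module ℂ V] (k : ℂ)
    (cur : ↥(sl (Fin 2) ℂ) → ℤ → Module.End ℂ V) (L : ℤ → Module.End ℂ V) : Prop :=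
  ∀ (n : ℤ) (v : V),
    L n v = (2 * (k + 2))⁻¹ • ∑ᶠ m : ℤ, (∑ a : Fin 3, nOrd cur (onb a) m (n - m)) v

/-! ### Sums over the integers -/

/-- A function on `ℤ` vanishing outside a bounded interval has finite support. -/
lemma finite_support_of_cut {W : Type*} [AddCommGroup W] (F : ℤ → W) (a b : ℤ)
    (h : ∀ p, p ≤ a ∨ b ≤ p → F p = 0) : (Function.support F).Finite := by
  refine (Set.finite_Icc a b).subset fun p hp => ?_
  by_contra hc
  exact hp (h p (by simp only [Set.mem_Icc, not_and_or] at hc; omega))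

lemma sum_Ico_telescope {W : Type*} [AddCommGroup W] (g : ℤ → W) (a b : ℤ) (hab : a ≤ b) :
    ∑ p ∈ Finset.Ico a b, (g (p + 1) - g p) = g b - g a := by
  induction b, hab using Int.leInduction with
  | base => simp
  | succ b hb ih =>
    have : Finset.Ico a (b + 1) = insert b (Finset.Ico a b) := by
      ext x; simp only [Finset.mem_Ico, Finset.mem_insert]; omega
    rw [this, Finset.sum_insert (by simp), ih]
    abel

lemma finsum_telescope {W : Type*} [AddCommGroup W] (g : ℤ → W) (c : W) (a b : ℤ)
    (ha : ∀ p, p ≤ a → g p = 0) (hb : ∀ p, b ≤ p → g p = c) :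
    ∑ᶠ p : ℤ, (g (p + 1) - g p) = c := by
  rw [finsum_eq_sum_of_support_subset (s := Finset.Ico (min a b - 1) (max a b))]
  · rw [sum_Ico_telescope _ _ _ (by omega), hb _ (by omega), ha _ (by omega), sub_zero]
  · intro p hp
    rw [Finset.coe_Ico, Set.mem_Ico]
    by_contra hc
    apply hp
    rcases (by omega : p + 1 ≤ a ∨ b ≤ p) with h | h
    · simp only [ha _ h, ha p (by omega), sub_zero]
    · simp only [hb _ h, hb (p + 1) (by omega), sub_self]

/-- If `g` is `0` near `-∞` and `c` near `+∞`, the shift by `l` changes its (divergent)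
sum by `l • c`. This is the source of the shift of the level `k` by the dual Coxeter
number in `SmoothCurrentRep.commutator_sum_cur`. -/
lemma finsum_shift {W : Type*} [AddCommGroup W] (g : ℤ → W) (c : W) (a b : ℤ)
    (ha : ∀ p, p ≤ a → g p = 0) (hb : ∀ p, b ≤ p → g p = c) (l : ℤ) :
    ∑ᶠ p : ℤ, (g (p + l) - g p) = l • c := by
  have fin : ∀ i j : ℤ, (Function.support fun p => g (p + i) - g (p + j)).Finite := by
    intro i j
    refine finite_support_of_cut _ (a - |i| - |j|) (b + |i| + |j|) fun p hp => ?_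
    have := abs_nonneg i; have := abs_nonneg j
    have := neg_abs_le i; have := neg_abs_le j
    have := le_abs_self i; have := le_abs_self j
    rcases hp with h | h
    · rw [ha _ (by omega), ha _ (by omega), sub_zero]
    · rw [hb _ (by omega), hb _ (by omega), sub_self]
  have one : ∀ l : ℤ, ∑ᶠ p : ℤ, (g (p + (l + 1)) - g (p + l)) = c := by
    intro l
    rw [← finsum_telescope (fun p => g (p + l)) c (a - l) (b - l)
      (fun p hp => ha _ (by omega)) (fun p hp => hb _ (by omega))]
    refine finsum_congr fun p => ?_
    rw [show p + (l + 1) = p + 1 + l by ring]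
  have step : ∀ l : ℤ, ∑ᶠ p : ℤ, (g (p + (l + 1)) - g p)
      = ∑ᶠ p : ℤ, (g (p + l) - g p) + c := by
    intro l
    have f0 := fin l 0
    simp only [add_zero] at f0
    rw [← one l, ← finsum_add_distrib f0 (fin _ _)]
    exact finsum_congr fun p => by abel
  induction l using Int.induction_on with
  | zero => simp
  | succ i ih => rw [step, ih, add_smul, one_smul]
  | pred i ih =>
    have := step (-(i : ℤ) - 1)
    rw [sub_add_cancel, ih] at this
    rw [sub_smul, this, one_smul, add_sub_cancel_right]

/-- The regularised sum behind the central charge. With `Q (p + 1) - Q p = (m + p) * p`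
and `Q 0 = 0`, the summand is the forward difference in `p` of
`Q p * [0 ≤ p] - (Q p - Q (-m)) * [0 ≤ m + p]`, which is `0` near `-∞` and `Q (-m)` near `+∞`. -/
lemma finsum_anomaly (m : ℤ) :
    ∑ᶠ p : ℤ, ((m : ℂ) + p) * p * ((if 0 ≤ p then 1 else 0) - (if 0 ≤ m + p then 1 else 0))
      = ((m : ℂ) ^ 3 - m) / 6 := by
  let Q : ℤ → ℂ := fun p => m * (p * (p - 1)) / 2 + (p - 1) * p * (2 * p - 1) / 6
  rw [← finsum_telescope (fun p => Q p * (if 0 ≤ p then 1 else 0)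
      - (Q p - Q (-m)) * (if 0 ≤ m + p then 1 else 0)) (((m : ℂ) ^ 3 - m) / 6)
      (-|m| - 1) (|m|)]
  · refine finsum_congr fun p => ?_
    have hQ : Q (p + 1) = Q p + (m + p) * p := by simp only [Q]; push_cast; ring
    have e1 : Q (p + 1) * (if 0 ≤ p + 1 then (1 : ℂ) else 0)
        = Q (p + 1) * (if 0 ≤ p then 1 else 0) := by
      by_cases h : p = -1
      · subst h; simp [Q]
      · simp only [show (0 ≤ p + 1) ↔ 0 ≤ p by omega]
    have e2 : (Q (p + 1) - Q (-m)) * (if 0 ≤ m + (p + 1) then (1 : ℂ) else 0)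
        = (Q (p + 1) - Q (-m)) * (if 0 ≤ m + p then 1 else 0) := by
      by_cases h : m + p = -1
      · rw [show p + 1 = -m by omega]; simp
      · simp only [show (0 ≤ m + (p + 1)) ↔ 0 ≤ m + p by omega]
    rw [e1, e2, hQ]
    ring
  · intro p hp
    have := neg_abs_le m; have := le_abs_self m; have := abs_nonneg m
    simp only [if_neg (by omega : ¬ 0 ≤ p), if_neg (by omega : ¬ 0 ≤ m + p)]
    ring
  · intro p hp
    have := neg_abs_le m; have := le_abs_self m; have := abs_nonneg m
    simp only [if_pos (by omega : 0 ≤ p), if_pos (by omega : 0 ≤ m + p), Q]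
    push_cast
    ring

/-! ### The orthonormal basis and the Casimir element -/

lemma sqrt_two_inv_mul_self : ((Real.sqrt 2 : ℂ))⁻¹ * ((Real.sqrt 2 : ℂ))⁻¹ = 1 / 2 := by
  rw [← mul_inv, ← Complex.ofReal_mul, Real.mul_self_sqrt (by norm_num)]
  norm_num

lemma sl_one_one (Y : ↥(sl (Fin 2) ℂ)) : Y.1 1 1 = - Y.1 0 0 := by
  have h : Matrix.trace Y.1 = 0 := Y.2
  rw [Matrix.trace_fin_two] at h
  linear_combination h

lemma sl_ext {A B : ↥(sl (Fin 2) ℂ)} (h0 : A.1 0 0 = B.1 0 0) (h1 : A.1 0 1 = B.1 0 1)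
    (h2 : A.1 1 0 = B.1 1 0) : A = B := by
  apply Subtype.ext
  ext i j
  fin_cases i <;> fin_cases j
  · exact h0
  · exact h1
  · exact h2
  · change A.1 1 1 = B.1 1 1
    rw [sl_one_one, sl_one_one, h0]

lemma sl_coe_add (A B : ↥(sl (Fin 2) ℂ)) : (A + B).1 = A.1 + B.1 := rfl

lemma sl_coe_smul (c : ℂ) (A : ↥(sl (Fin 2) ℂ)) : (c • A).1 = c • A.1 := rfl

lemma sl_coe_bracket (A B : ↥(sl (Fin 2) ℂ)) : (⁅A, B⁆).1 = A.1 * B.1 - B.1 * A.1 := rfl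

lemma onb_zero : (onb 0).1 = (Real.sqrt 2 : ℂ)⁻¹ • !![1, 0; 0, -1] := rfl

lemma onb_one : (onb 1).1 = (Real.sqrt 2 : ℂ)⁻¹ • !![0, 1; 1, 0] := by
  change (Real.sqrt 2 : ℂ)⁻¹ • (!![0, 1; 0, 0] + !![0, 0; 1, 0] : Matrix (Fin 2) (Fin 2) ℂ) = _
  congr 1
  ext i j
  fin_cases i <;> fin_cases j <;> simp

lemma onb_two : (onb 2).1 = (Complex.I * (Real.sqrt 2 : ℂ)⁻¹) • !![0, 1; -1, 0] := by
  change (Complex.I * (Real.sqrt 2 : ℂ)⁻¹) •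
    (!![0, 1; 0, 0] - !![0, 0; 1, 0] : Matrix (Fin 2) (Fin 2) ℂ) = _
  congr 1
  ext i j
  fin_cases i <;> fin_cases j <;> simp

lemma trForm_onb_self (a : Fin 3) : trForm (onb a) (onb a) = 1 := by
  have hs := sqrt_two_inv_mul_self
  have hI := Complex.I_mul_I
  fin_cases a <;>
    simp only [trForm, Fin.zero_eta, Fin.mk_one, Fin.reduceFinMk, onb_zero, onb_one, onb_two,
      Matrix.trace_fin_two, Matrix.mul_apply, Fin.sum_univ_two, Matrix.smul_apply,
      Matrix.of_apply, Matrix.cons_val', Matrix.cons_val_zero, Matrix.cons_val_one,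
      Matrix.cons_val_fin_one, smul_eq_mul] <;>
    generalize (Real.sqrt 2 : ℂ)⁻¹ = s at *
  · linear_combination 2 * hs
  · linear_combination 2 * hs
  · linear_combination 2 * hs - 2 * s * s * hI

/-- Completeness of the orthonormal basis. -/
lemma onb_expand (Y : ↥(sl (Fin 2) ℂ)) : ∑ a, trForm (onb a) Y • onb a = Y := by
  have hs := sqrt_two_inv_mul_self
  have hI := Complex.I_mul_I
  have hY := sl_one_one Y
  rw [Fin.sum_univ_three]
  apply sl_ext <;>
    simp only [trForm, sl_coe_add, sl_coe_smul, onb_zero, onb_one, onb_two,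
      Matrix.trace_fin_two, Matrix.mul_apply, Fin.sum_univ_two, Matrix.smul_apply,
      Matrix.add_apply,
      Matrix.of_apply, Matrix.cons_val', Matrix.cons_val_zero, Matrix.cons_val_one,
      Matrix.cons_val_fin_one, smul_eq_mul, hY] <;>
    generalize (Real.sqrt 2 : ℂ)⁻¹ = s at *
  · linear_combination 2 * Y.1 0 0 * hs
  · linear_combination 2 * Y.1 0 1 * hs + s * s * (Y.1 1 0 - Y.1 0 1) * hI
  · linear_combination 2 * Y.1 1 0 * hs + s * s * (Y.1 0 1 - Y.1 1 0) * hI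

/-- The Casimir element acts on the adjoint representation by `4`, twice the dual Coxeter
number of `sl₂`. -/
lemma casimir_adjoint (Y : ↥(sl (Fin 2) ℂ)) :
    ∑ a, ⁅onb a, ⁅onb a, Y⁆⁆ = (4 : ℂ) • Y := by
  have hs := sqrt_two_inv_mul_self
  have hI := Complex.I_mul_I
  have hY := sl_one_one Y
  rw [Fin.sum_univ_three]
  apply sl_ext <;>
    simp only [sl_coe_add, sl_coe_smul, sl_coe_bracket, onb_zero, onb_one, onb_two,
      Matrix.mul_apply, Fin.sum_univ_two, Matrix.smul_apply,
      Matrix.add_apply, Matrix.sub_apply,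
      Matrix.of_apply, Matrix.cons_val', Matrix.cons_val_zero, Matrix.cons_val_one,
      Matrix.cons_val_fin_one, smul_eq_mul, hY] <;>
    generalize (Real.sqrt 2 : ℂ)⁻¹ = s at *
  · linear_combination 8 * Y.1 0 0 * hs - 4 * s * s * Y.1 0 0 * hI
  · linear_combination 8 * Y.1 0 1 * hs - 2 * s * s * (Y.1 0 1 + Y.1 1 0) * hI
  · linear_combination 8 * Y.1 1 0 * hs - 2 * s * s * (Y.1 0 1 + Y.1 1 0) * hI

/-- Invariance of the trace form, as antisymmetry of `ad Y`. -/
lemma trForm_bracket_antisymm (A B Y : ↥(sl (Fin 2) ℂ)) :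
    trForm A ⁅B, Y⁆ = - trForm B ⁅A, Y⁆ := by
  simp only [trForm, sl_coe_bracket, mul_sub, Matrix.trace_sub]
  have h1 := Matrix.trace_mul_cycle A.1 Y.1 B.1
  have h2 := Matrix.trace_mul_cycle B.1 Y.1 A.1
  simp only [← mul_assoc]
  linear_combination -h1 - h2

lemma trForm_bracket_self (A Y : ↥(sl (Fin 2) ℂ)) : trForm A ⁅A, Y⁆ = 0 := by
  have := trForm_bracket_antisymm A A Y
  linear_combination this / 2

namespace SmoothCurrentRep

variable {k : ℂ} {V : Type*} [AddCommGroup V] [Module ℂ V] (R : SmoothCurrentRep k V)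

/-! ### Currents -/

/-- The mode `X ↦ X(n)` as a linear map. -/
def curL (n : ℤ) : ↥(sl (Fin 2) ℂ) →ₗ[ℂ] Module.End ℂ V where
  toFun A := R.cur A n
  map_add' A B := R.cur_add A B n
  map_smul' c A := R.cur_smul c A n

lemma cur_eq (A : ↥(sl (Fin 2) ℂ)) (n : ℤ) : R.cur A n = R.curL n A := rfl

/-- Invariance of the Casimir tensor `Σ X_a ⊗ X_a`, in the modes `p`, `q`. -/
lemma sum_bracket_cur (Y : ↥(sl (Fin 2) ℂ)) (p q : ℤ) :
    ∑ a, R.cur ⁅onb a, Y⁆ p * R.cur (onb a) q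
      = - ∑ a, R.cur (onb a) p * R.cur ⁅onb a, Y⁆ q := by
  have e (n : ℤ) (a : Fin 3) : R.cur ⁅onb a, Y⁆ n
      = ∑ b, trForm (onb b) ⁅onb a, Y⁆ • R.cur (onb b) n := by
    conv_lhs => rw [← onb_expand ⁅onb a, Y⁆]
    simp only [cur_eq, map_sum, map_smul]
  simp only [e, Finset.sum_mul, Finset.mul_sum, smul_mul_assoc, mul_smul_comm]
  rw [Finset.sum_comm, ← Finset.sum_neg_distrib]
  refine Finset.sum_congr rfl fun a _ => ?_
  rw [← Finset.sum_neg_distrib]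
  refine Finset.sum_congr rfl fun b _ => ?_
  rw [trForm_bracket_antisymm, neg_smul]

lemma mul_comm_cur (A B : ↥(sl (Fin 2) ℂ)) (m n : ℤ) :
    R.cur A m * R.cur B n = R.cur B n * R.cur A m + R.cur ⁅A, B⁆ (m + n)
      + (if m + n = 0 then (m : ℂ) * trForm A B * k else 0) • (1 : Module.End ℂ V) := by
  have h := R.commutator A B m n
  rw [Ring.lie_def] at h
  rw [add_assoc, ← h]
  abel

/-- The `m`-th term of the sum defining `2(k+2) L_n`. -/
def term (n m : ℤ) : Module.End ℂ V := ∑ a : Fin 3, nOrd R.cur (onb a) m (n - m)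

/-- The products `Σ_a X_a(p) X_a(n-p)` without normal ordering. -/
def prod (n p : ℤ) : Module.End ℂ V := ∑ a : Fin 3, R.cur (onb a) p * R.cur (onb a) (n - p)

lemma prod_eq (n p : ℤ) :
    R.prod n p = (∑ a : Fin 3, R.cur (onb a) (n - p) * R.cur (onb a) p)
      + (if n = 0 then 3 * k * p else 0) • (1 : Module.End ℂ V) := by
  have h0 (m : ℤ) : R.cur 0 m = 0 := map_zero (R.curL m)
  simp only [prod]
  rw [Finset.sum_congr rfl fun a _ => R.mul_comm_cur (onb a) (onb a) p (n - p)]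
  simp only [lie_self, h0, add_zero, trForm_onb_self, add_sub_cancel, Finset.sum_add_distrib]
  congr 1
  split_ifs
  · simp only [Finset.sum_const, Finset.card_univ, Fintype.card_fin, ← Nat.cast_smul_eq_nsmul ℂ,
      smul_smul]
    congr 1; push_cast; ring
  · simp

/-- Normal ordering changes `Σ_a X_a(p) X_a(n-p)` by a scalar. -/
lemma prod_eq_term (n p : ℤ) :
    R.prod n p = R.term n p
      + (if n = 0 then 3 * k * p * (if 0 ≤ p then 1 else 0) else 0) • (1 : Module.End ℂ V) := by
  by_cases hp : p < 0
  · simp [term, prod, nOrd, hp, not_le.2 hp]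
  · rw [prod_eq]
    simp [term, nOrd, hp, not_lt.1 hp]

lemma term_finite (n : ℤ) (v : V) : (Function.support fun p => R.term n p v).Finite := by
  obtain ⟨N, hN⟩ := R.smooth v
  refine finite_support_of_cut _ (min (-1) (n - N)) (max 0 N) fun p hp => ?_
  simp only [term, LinearMap.sum_apply]
  refine Finset.sum_eq_zero fun a _ => ?_
  rcases hp with h | h
  · rw [nOrd, if_pos (by omega), Module.End.mul_apply, hN _ _ (by omega), map_zero]
  · rw [nOrd, if_neg (by omega), Module.End.mul_apply, hN _ _ (by omega), map_zero]

/-! ### Commutators with currents -/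

/-- The bracket of the `p`-th term of `2(k+2) L_n` with `Y(l)`. Up to the central
contribution it is `g p - g (p + l)`, where `g p = Σ_a X_a(p) [X_a, Y](n+l-p)`,
whether or not the term had to be reordered. -/
lemma commutator_term_cur (Y : ↥(sl (Fin 2) ℂ)) (n l p : ℤ) :
    R.term n p * R.cur Y l - R.cur Y l * R.term n p
      = (∑ a, R.cur (onb a) p * R.cur ⁅onb a, Y⁆ (n + l - p)
          - ∑ a, R.cur (onb a) (p + l) * R.cur ⁅onb a, Y⁆ (n + l - (p + l)))
        + ((if n + l = p then (-l : ℂ) * k else 0) + (if p = -l then (-l : ℂ) * k else 0))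
            • R.cur Y (n + l) := by
  -- Normal ordering only changes the term by a scalar, which commutes with `Y(l)`.
  have h1 : R.term n p * R.cur Y l - R.cur Y l * R.term n p
      = R.prod n p * R.cur Y l - R.cur Y l * R.prod n p := by
    rw [prod_eq_term, add_mul, mul_add, smul_mul_assoc, mul_smul_comm, one_mul, mul_one]
    abel
  have h2 : ∀ a, R.cur (onb a) p * R.cur (onb a) (n - p) * R.cur Y l
      - R.cur Y l * (R.cur (onb a) p * R.cur (onb a) (n - p))
      = R.cur (onb a) p * R.cur ⁅onb a, Y⁆ (n + l - p)
        + R.cur ⁅onb a, Y⁆ (p + l) * R.cur (onb a) (n - p)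
        + ((if n + l = p then (-l : ℂ) * k else 0) • trForm (onb a) Y • R.cur (onb a) (n + l)
        + (if p = -l then (-l : ℂ) * k else 0) • trForm (onb a) Y • R.cur (onb a) (n + l)) := by
    intro a
    rw [mul_assoc, R.mul_comm_cur _ Y (n - p) l, mul_add, mul_add, ← mul_assoc _ (R.cur Y l),
      R.mul_comm_cur _ Y p l, show n - p + l = n + l - p by ring]
    simp only [add_mul, mul_smul_comm, smul_mul_assoc, mul_one, one_mul, mul_assoc]
    have e1 : (if n + l - p = 0 then ((n - p : ℤ) : ℂ) * trForm (onb a) Y * k else 0)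
          • R.cur (onb a) p
        = (if n + l = p then (-l : ℂ) * k else 0)
          • trForm (onb a) Y • R.cur (onb a) (n + l) := by
      by_cases h : n + l = p
      · rw [if_pos (by omega), if_pos h, h, smul_smul, show n - p = -l by omega]
        congr 1; push_cast; ring
      · rw [if_neg (by omega), if_neg h, zero_smul, zero_smul]
    have e2 : (if p + l = 0 then (p : ℂ) * trForm (onb a) Y * k else 0)
          • R.cur (onb a) (n - p)
        = (if p = -l then (-l : ℂ) * k else 0)
          • trForm (onb a) Y • R.cur (onb a) (n + l) := by
      by_cases h : p = -l
      · rw [if_pos (by omega), if_pos h, smul_smul, h, show n - -l = n + l by omega]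
        congr 1; push_cast; ring
      · rw [if_neg (by omega), if_neg h, zero_smul, zero_smul]
    simp only [mul_assoc] at e1 e2
    rw [e1, e2]
    abel
  rw [h1, prod, Finset.sum_mul, Finset.mul_sum, ← Finset.sum_sub_distrib,
    Finset.sum_congr rfl fun a _ => h2 a, Finset.sum_add_distrib, Finset.sum_add_distrib,
    Finset.sum_add_distrib, ← Finset.smul_sum, ← Finset.smul_sum, sum_bracket_cur,
    show n + l - (p + l) = n - p by ring, add_smul, ← sub_eq_add_neg]
  have h3 : ∑ a, trForm (onb a) Y • R.cur (onb a) (n + l) = R.cur Y (n + l) := by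
    conv_rhs => rw [← onb_expand Y]
    simp only [cur_eq, map_sum, map_smul]
  rw [h3]

/-- Near `-∞` the function `g p = Σ_a X_a(p) [X_a, Y](s-p)` annihilates any given vector;
near `+∞` the
factors have to be exchanged, and the Casimir eigenvalue appears. -/
lemma sum_cur_bracket_swap (Y : ↥(sl (Fin 2) ℂ)) (s p : ℤ) :
    ∑ a, R.cur (onb a) p * R.cur ⁅onb a, Y⁆ (s - p)
      = ∑ a, R.cur ⁅onb a, Y⁆ (s - p) * R.cur (onb a) p + (4 : ℂ) • R.cur Y s := by
  rw [Finset.sum_congr rfl fun a _ => R.mul_comm_cur (onb a) ⁅onb a, Y⁆ p (s - p)]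
  simp only [trForm_bracket_self, mul_zero, zero_mul, ite_self, zero_smul, add_zero,
    add_sub_cancel, Finset.sum_add_distrib]
  congr 1
  simp only [cur_eq, ← map_sum, ← map_smul, casimir_adjoint]

/-- `[2(k+2) L_n, Y(l)] = -2 l (k+2) Y(n+l)`: the level contributes `k` through the two central
terms, and the telescoping of `g` contributes the Casimir eigenvalue `4 = 2 * 2`. -/
lemma commutator_sum_cur (Y : ↥(sl (Fin 2) ℂ)) (n l : ℤ) (v : V) :
    ∑ᶠ p, R.term n p (R.cur Y l v) - R.cur Y l (∑ᶠ p, R.term n p v)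
      = (-(l : ℂ) * (2 * (k + 2))) • R.cur Y (n + l) v := by
  obtain ⟨N, hN⟩ := R.smooth v
  have hf := R.term_finite n v
  have hf' : (Function.support fun p => R.cur Y l (R.term n p v)).Finite :=
    hf.subset fun p hp h0 => hp (by simp only [h0, map_zero])
  have e1 : R.cur Y l (∑ᶠ p, R.term n p v) = ∑ᶠ p, R.cur Y l (R.term n p v) :=
    (R.cur Y l).toAddMonoidHom.map_finsum hf
  rw [e1, ← finsum_sub_distrib (R.term_finite n _) hf']
  let g : ℤ → V := fun p => (∑ a, R.cur (onb a) p * R.cur ⁅onb a, Y⁆ (n + l - p)) v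
  have ga : ∀ p, p ≤ n + l - N → g p = 0 := by
    intro p hp
    simp only [g, LinearMap.sum_apply, Module.End.mul_apply]
    exact Finset.sum_eq_zero fun a _ => by rw [hN _ _ (by omega), map_zero]
  have gb : ∀ p, N ≤ p → g p = (4 : ℂ) • R.cur Y (n + l) v := by
    intro p hp
    simp only [g, sum_cur_bracket_swap, LinearMap.add_apply, LinearMap.smul_apply,
      LinearMap.sum_apply, Module.End.mul_apply]
    rw [Finset.sum_eq_zero fun a _ => by rw [hN _ _ hp, map_zero], zero_add]
  let w : V := R.cur Y (n + l) v
  have key : ∀ p, R.term n p (R.cur Y l v) - R.cur Y l (R.term n p v)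
      = (-(g (p + l) - g p) + (if n + l = p then ((-l : ℂ) * k) • w else 0))
        + (if p = -l then ((-l : ℂ) * k) • w else 0) := by
    intro p
    have := congrArg (fun T : Module.End ℂ V => T v) (R.commutator_term_cur Y n l p)
    simp only [LinearMap.sub_apply, LinearMap.add_apply, LinearMap.smul_apply,
      Module.End.mul_apply] at this
    rw [this]
    simp only [g, w, add_smul, ite_smul, zero_smul, neg_sub, add_assoc]
  have f1 : (Function.support fun p => -(g (p + l) - g p)).Finite := by
    refine finite_support_of_cut _ (n + l - N - |l|) (N + |l|) fun p hp => ?_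
    have := neg_abs_le l; have := le_abs_self l; have := abs_nonneg l
    rcases hp with h | h
    · rw [ga _ (by omega), ga _ (by omega), sub_zero, neg_zero]
    · rw [gb _ (by omega), gb _ (by omega), sub_self, neg_zero]
  have f2 : (Function.support fun p =>
      if n + l = p then ((-l : ℂ) * k) • w else 0).Finite :=
    (Set.finite_singleton (n + l)).subset fun p hp => by
      by_contra hc; exact hp (if_neg fun h => hc h.symm)
  have f3 : (Function.support fun p =>
      if p = -l then ((-l : ℂ) * k) • w else 0).Finite :=
    (Set.finite_singleton (-l)).subset fun p hp => by
      by_contra hc; exact hp (if_neg hc)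
  rw [finsum_congr key, finsum_add_distrib ((f1.union f2).subset (Function.support_add _ _)) f3,
    finsum_add_distrib f1 f2, finsum_neg_distrib, finsum_shift g _ _ _ ga gb l,
    finsum_eq_single _ (n + l) (fun p hp => if_neg fun h => hp h.symm),
    finsum_eq_single _ (-l) (fun p hp => if_neg hp), if_pos rfl, if_pos rfl]
  simp only [w, ← Int.cast_smul_eq_zsmul ℂ, smul_smul, ← neg_smul, ← add_smul]
  congr 1
  ring

/-- The Sugawara operators act on currents as the vector fields `-t^{n+1} d/dt`. -/
lemma commutator_sugawara_cur (hk : k ≠ -2) {L : ℤ → Module.End ℂ V}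
    (hL : IsSugawara k R.cur L) (Y : ↥(sl (Fin 2) ℂ)) (n l : ℤ) :
    L n * R.cur Y l - R.cur Y l * L n = (-(l : ℂ)) • R.cur Y (n + l) := by
  have hk' : k + 2 ≠ 0 := fun h => hk (by linear_combination h)
  ext v
  have h := R.commutator_sum_cur Y n l v
  simp only [LinearMap.sub_apply, Module.End.mul_apply, LinearMap.smul_apply, hL n, map_smul]
  simp only [term] at h
  rw [← smul_sub, h, smul_smul]
  congr 1
  field_simp

/-! ### Commutators of Sugawara operators -/

/-- As for currents, the reordering scalars cancel: `[L_m, ·]` of the `p`-th term of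
`2(k+2) L_n` is given by one formula for all `p`. -/
lemma commutator_sugawara_term (hk : k ≠ -2) {L : ℤ → Module.End ℂ V}
    (hL : IsSugawara k R.cur L) (m n p : ℤ) :
    L m * R.term n p - R.term n p * L m
      = (-(p : ℂ)) • R.prod (m + n) (m + p) + ((p : ℂ) - n) • R.prod (m + n) p := by
  have h1 : L m * R.term n p - R.term n p * L m = L m * R.prod n p - R.prod n p * L m := by
    rw [prod_eq_term, add_mul, mul_add, smul_mul_assoc, mul_smul_comm, one_mul, mul_one]
    abel
  rw [h1, prod, prod, prod, Finset.mul_sum, Finset.sum_mul, ← Finset.sum_sub_distrib,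
    Finset.smul_sum, Finset.smul_sum, ← Finset.sum_add_distrib]
  refine Finset.sum_congr rfl fun a _ => ?_
  have c1 := R.commutator_sugawara_cur hk hL (onb a) m p
  have c2 := R.commutator_sugawara_cur hk hL (onb a) m (n - p)
  rw [show m + n - (m + p) = n - p by ring, show m + n - p = m + (n - p) by ring,
    ← smul_mul_assoc, ← c1, ← mul_smul_comm,
    show ((p : ℂ) - n) = -((n - p : ℤ) : ℂ) by push_cast; ring, ← c2]
  noncomm_ring

lemma commutator_sugawara_sum (hk : k ≠ -2) {L : ℤ → Module.End ℂ V}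
    (hL : IsSugawara k R.cur L) (m n : ℤ) (v : V) :
    L m (∑ᶠ p, R.term n p v) - ∑ᶠ p, R.term n p (L m v)
      = ((m : ℂ) - n) • ∑ᶠ p, R.term (m + n) p v
        + (if m + n = 0 then 3 * k * (((m : ℂ) ^ 3 - m) / 6) else 0) • v := by
  have hf := R.term_finite n v
  have hf' : (Function.support fun p => L m (R.term n p v)).Finite :=
    hf.subset fun p hp h0 => hp (by simp only [h0, map_zero])
  have e1 : L m (∑ᶠ p, R.term n p v) = ∑ᶠ p, L m (R.term n p v) :=
    (L m).toAddMonoidHom.map_finsum hf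
  rw [e1, ← finsum_sub_distrib hf' (R.term_finite n _)]
  let φ : ℤ → ℂ := fun p =>
    ((m : ℂ) + p) * p * ((if 0 ≤ p then 1 else 0) - (if 0 ≤ m + p then 1 else 0))
  let T : ℤ → V := fun p => R.term (m + n) p v
  have key : ∀ p, L m (R.term n p v) - R.term n p (L m v)
      = ((-(p : ℂ)) • T (m + p) + ((p : ℂ) - n) • T p)
        + φ p • (if m + n = 0 then 3 * k else 0) • v := by
    intro p
    have := congrArg (fun S : Module.End ℂ V => S v) (R.commutator_sugawara_term hk hL m n p)
    simp only [prod_eq_term, LinearMap.sub_apply, LinearMap.add_apply, LinearMap.smul_apply,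
      Module.End.mul_apply, Module.End.one_apply] at this
    rw [this]
    by_cases h : m + n = 0
    · have hn : (n : ℂ) = -m := by
        rw [show n = -m by omega]; push_cast; ring
      simp only [T, φ, hn, h, if_true]
      push_cast
      module
    · simp only [if_neg h, T, zero_smul, smul_zero, add_zero]
  have fT : (Function.support T).Finite := R.term_finite (m + n) v
  have f1 : (Function.support fun p : ℤ => (-(p : ℂ)) • T (m + p)).Finite := by
    refine (fT.preimage (f := fun p => m + p) (add_right_injective m).injOn).subset
      fun p hp h0 => hp ?_
    have h0' : T (m + p) = 0 := h0
    simp only [h0', smul_zero]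
  have f2 : (Function.support fun p : ℤ => ((p : ℂ) - n) • T p).Finite :=
    fT.subset fun p hp h0 => hp (by simp only [h0, smul_zero])
  have f2' : (Function.support fun p : ℤ => (-((p : ℂ) - m)) • T p).Finite :=
    fT.subset fun p hp h0 => hp (by simp only [h0, smul_zero])
  have fφ : (Function.support φ).Finite := by
    refine finite_support_of_cut _ (-|m| - 1) |m| fun p hp => ?_
    have := neg_abs_le m; have := le_abs_self m; have := abs_nonneg m
    simp only [φ]
    rcases hp with h | h
    · rw [if_neg (by omega), if_neg (by omega), sub_zero, mul_zero]
    · rw [if_pos (by omega), if_pos (by omega), sub_self, mul_zero]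
  have f3 : (Function.support fun p : ℤ =>
      φ p • (if m + n = 0 then 3 * k else 0) • v).Finite :=
    fφ.subset fun p hp h0 => hp (by simp only [h0, zero_smul])
  have s1 : ∑ᶠ p : ℤ, (-(p : ℂ)) • T (m + p) = ∑ᶠ p : ℤ, (-((p : ℂ) - m)) • T p := by
    rw [← finsum_comp_equiv (Equiv.addLeft m) (f := fun p : ℤ => (-((p : ℂ) - m)) • T p)]
    refine finsum_congr fun p => ?_
    simp only [Equiv.coe_addLeft]
    push_cast
    congr 1
    ring
  rw [finsum_congr key, finsum_add_distrib ((f1.union f2).subset (Function.support_add _ _)) f3,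
    finsum_add_distrib f1 f2, s1, ← finsum_add_distrib f2' f2, ← finsum_smul,
    finsum_anomaly m]
  congr 1
  · rw [smul_finsum]
    exact finsum_congr fun p => by rw [← add_smul]; congr 1; ring
  · rw [smul_smul]
    congr 1
    split_ifs <;> ring

end SmoothCurrentRep

/-!
STATEMENT 6: For `k ≠ −2` and a smooth sl₂-current representation of level `k`
on `V` with Sugawara operators `L n`, the `L n` satisfy the Virasoro relations
with central charge `c = 3k/(k+2)`:
`[L m, L n] = (m − n) L (m+n) + ((m³−m)/12) δ_{m+n,0} (3k/(k+2)) · Id`.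
-/

theorem sugawara_virasoro_relations
    (k : ℂ) (hk : k ≠ -2) (V : Type*) [AddCommGroup V] [Module ℂ V]
    (R : SmoothCurrentRep k V)
    (L : ℤ → Module.End ℂ V) (hL : IsSugawara k R.cur L) :
    ∀ m n : ℤ, ⁅L m, L n⁆ = ((m : ℂ) - (n : ℂ)) • L (m + n)
      + (if m + n = 0 then (((m : ℂ) ^ 3 - (m : ℂ)) / 12) * (3 * k / (k + 2)) else 0)
          • (1 : Module.End ℂ V) := by
  intro m n
  have hk' : k + 2 ≠ 0 := fun h => hk (by linear_combination h)
  have hS : ∀ (n : ℤ) (v : V), L n v = (2 * (k + 2))⁻¹ • ∑ᶠ p, R.term n p v := hL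
  ext v
  rw [Ring.lie_def]
  simp only [LinearMap.sub_apply, Module.End.mul_apply, LinearMap.add_apply,
    LinearMap.smul_apply, Module.End.one_apply]
  rw [hS n v, hS n (L m v), hS (m + n) v, map_smul, ← smul_sub,
    R.commutator_sugawara_sum hk hL, smul_add, smul_comm, smul_smul (2 * (k + 2))⁻¹ (ite _ _ _)]
  congr 2
  split_ifs
  · field_simp
    ring
  · simp

end
end

section
/- Let k ∈ ℂ with k ∉ {−2, −3}. Let V carry a smooth sl₂-current representation of level k and W a smooth sl₂-current representation of level 1. On the tensor product V ⊗ W, the diagonal operators X^d(n) = X(n) ⊗ Id + Id ⊗ X(n) form a smooth sl₂-current representation of level k + 1. Let L^{(k)}_n, L^{(1)}_n, L^{(k+1)}_n denote the Sugawara operators of the level-k action on the first factor, the level-1 action on the second factor, and the diagonal level-(k+1) action, respectively, and set K_n = L^{(k)}_n ⊗ Id + Id ⊗ L^{(1)}_n − L^{(k+1)}_n. Then: (i) [K_m, X^d(n)] = 0 for all X ∈ sl₂(ℂ) and all integers m, n; and (ii) the coset operators K_n satisfy the Virasoro relations with central charge 1 − 6/((k+2)(k+3)): [K_m, K_n] =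 (m − n) K_{m+n} + ((m³ − m)/12) δ_{m+n,0} (1 − 6/((k+2)(k+3))) · Id. -/
/-!
This is the Goddard–Kent–Olive coset construction.

For one smooth representation of level `k`, normal ordering alters each term
`Σ_a X_a(r) X_a(n - r)` by a scalar, so commutators with the Sugawara operator can be computed term
by term with the ordering ignored. With a current this gives a shift difference of cross terms plus
a central part, and summing over `r` yields `[L_n, X(p)] = -p X(n+p)` (`IsSugawara.lie_cur`): the
central part contributes `k` and the regularization of the cross terms contributes `2` to the factor
`k + 2`. Applying this to each term of `L_n` gives the Virasoro relations with central charge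
`3k/(k+2)` (`IsSugawara.virasoro`); the anomaly comes from restoring the normal ordering, as
`Σ r (r + m)` over an interval of length `|m|`. These sums are finite on every vector, and the
predicate `FinSum` keeps track of that.

Put `T_n = L^{(k)}_n ⊗ 1 + 1 ⊗ L^{(1)}_n`, so that `K_n = T_n - L^{(k+1)}_n`. Both `T_n` and
`L^{(k+1)}_n` have the same commutators with the diagonal currents, so `K_n` commutes with these,
and therefore with all `L^{(k+1)}_m` (`IsSugawara.lie_eq_zero`). Consequently
`[K_m, K_n] = [T_m, T_n] - [L^{(k+1)}_m, L^{(k+1)}_n]`, and the central charge is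
`3k/(k+2) + 1 - 3(k+1)/(k+3) = 1 - 6/((k+2)(k+3))`.
-/


open LieAlgebra.SpecialLinear

noncomputable section

/-! ### Finitely supported sums over `ℤ` -/

/-- `FinSum f s`: the family `f : ℤ → M` has finite support and its sum is `s`.  Recording the
finiteness together with the value keeps the junk value of `finsum` out of the computations. -/
def FinSum {M : Type*} [AddCommGroup M] (f : ℤ → M) (s : M) : Prop :=
  f.support.Finite ∧ ∑ᶠ r, f r = s

namespace FinSum

variable {M : Type*} [AddCommGroup M] {f g : ℤ → M} {s t : M}

lemma congr' (h : FinSum f s) (hf : ∀ r, g r = f r) (hs : t = s) : FinSum g t := by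
  obtain rfl : g = f := funext hf
  exact hs ▸ h

lemma add (h : FinSum f s) (h' : FinSum g t) : FinSum (fun r => f r + g r) (s + t) :=
  ⟨(h.1.union h'.1).subset (Function.support_add f g), by
    rw [finsum_add_distrib h.1 h'.1, h.2, h'.2]⟩

lemma sub (h : FinSum f s) (h' : FinSum g t) : FinSum (fun r => f r - g r) (s - t) :=
  ⟨(h.1.union h'.1).subset (Function.support_sub f g), by
    rw [finsum_sub_distrib h.1 h'.1, h.2, h'.2]⟩

lemma map {N : Type*} [AddCommGroup N] (φ : M →+ N) (h : FinSum f s) :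
    FinSum (fun r => φ (f r)) (φ s) :=
  ⟨h.1.subset fun r hr hf => hr (by simp [hf]), by
    rw [← h.2, AddMonoidHom.map_finsum φ h.1]⟩

lemma smul [Module ℂ M] (c : ℂ) (h : FinSum f s) : FinSum (fun r => c • f r) (c • s) :=
  h.map (DistribSMul.toAddMonoidHom M c)

lemma shift (p : ℤ) (h : FinSum f s) : FinSum (fun r => f (r + p)) s :=
  ⟨h.1.preimage (add_left_injective p).injOn, by
    rw [← h.2]; exact finsum_comp_equiv (Equiv.addRight p)⟩

lemma single (q : ℤ) (f : ℤ → M) : FinSum (fun r => if r = q then f r else 0) (f q) := by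
  refine ⟨(Set.finite_singleton q).subset fun r hr => ?_, ?_⟩
  · by_contra h
    exact hr (if_neg h)
  · rw [finsum_eq_single _ q fun r hr => if_neg hr, if_pos rfl]

lemma of_eq_zero (h : ∃ a b : ℤ, ∀ r, r < a ∨ b < r → f r = 0) : FinSum f (∑ᶠ r, f r) := by
  obtain ⟨a, b, h⟩ := h
  refine ⟨(Set.finite_Icc a b).subset fun r hr => ?_, rfl⟩
  by_contra hc
  refine hr (h r ?_)
  rw [Set.mem_Icc] at hc
  omega

end FinSum

lemma sum_Ico_telescope_s9 {h P : ℤ → ℂ} (hP : ∀ r, P (r + 1) - P r = h r) {a b : ℤ} (hab : a ≤ b) :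
    ∑ r ∈ Finset.Ico a b, h r = P b - P a := by
  induction b, hab using Int.leInduction with
  | base => simp
  | succ b hb ih =>
    rw [← Finset.insert_Ico_right_eq_Ico_add_one hb, Finset.sum_insert (by simp), ih, ← hP b]
    ring

/-- The unit step function at `0`. -/
def step (r : ℤ) : ℂ := if 0 ≤ r then 1 else 0

/-- Summing a function with discrete primitive `P` against the difference of two unit steps.
Stated for both signs of the shift `p` at once. -/
lemma FinSum.step_diff {M : Type*} [AddCommGroup M] [Module ℂ M] {h P : ℤ → ℂ}
    (hP : ∀ r, P (r + 1) - P r = h r) (p : ℤ) (w : M) :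
    FinSum (fun r => (h r * (step (r + p) - step r)) • w) ((P 0 - P (-p)) • w) := by
  have key : FinSum (fun r => h r * (step (r + p) - step r)) (P 0 - P (-p)) := by
    rcases le_total 0 p with hp | hp
    · have e : ∀ r, h r * (step (r + p) - step r)
          = if r ∈ Finset.Ico (-p) 0 then h r else 0 := by
        intro r
        unfold step
        simp only [Finset.mem_Ico]
        split_ifs <;> first | omega | simp
      refine ⟨(Finset.Ico (-p) 0).finite_toSet.subset fun r hr => ?_, ?_⟩
      · by_contra hc
        exact hr ((e r).trans (if_neg hc))
      · rw [finsum_congr e, finsum_eq_sum_of_support_subset (s := Finset.Ico (-p) 0)]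
        · rw [Finset.sum_congr rfl fun r hr => if_pos hr, sum_Ico_telescope_s9 hP (by omega)]
        · intro r hr
          by_contra hc
          exact hr (if_neg hc)
    · have e : ∀ r, h r * (step (r + p) - step r)
          = if r ∈ Finset.Ico 0 (-p) then -h r else 0 := by
        intro r
        unfold step
        simp only [Finset.mem_Ico]
        split_ifs <;> first | omega | simp
      refine ⟨(Finset.Ico 0 (-p)).finite_toSet.subset fun r hr => ?_, ?_⟩
      · by_contra hc
        exact hr ((e r).trans (if_neg hc))
      · rw [finsum_congr e, finsum_eq_sum_of_support_subset (s := Finset.Ico 0 (-p))]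
        · rw [Finset.sum_congr rfl fun r hr => if_pos hr, Finset.sum_neg_distrib,
            sum_Ico_telescope_s9 hP (by omega), neg_sub]
        · intro r hr
          by_contra hc
          exact hr (if_neg hc)
  exact key.map ((LinearMap.toSpanSingleton ℂ M w).toAddMonoidHom)

/-! ### The orthonormal basis of `sl₂(ℂ)` -/

/-- The structure constant `s = -i√2`: `[X_a, X_{a+1}] = s X_{a+2}` with indices mod `3`. -/
def sc : ℂ := -(Complex.I * (Real.sqrt 2 : ℂ))

lemma sqrt_two_sq : (Real.sqrt 2 : ℂ) ^ 2 = 2 := by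
  rw [← Complex.ofReal_pow, Real.sq_sqrt (by norm_num)]; norm_num

lemma sqrt_two_ne : (Real.sqrt 2 : ℂ) ≠ 0 := by
  intro h
  have := sqrt_two_sq
  rw [h] at this
  norm_num at this

lemma sc_sq : sc * sc = -2 := by
  unfold sc
  linear_combination (Complex.I ^ 2) * sqrt_two_sq + 2 * Complex.I_sq

lemma onb_lie (a : Fin 3) : ⁅onb a, onb (a + 1)⁆ = sc • onb (a + 2) := by
  have h2 := sqrt_two_sq
  have h0 := sqrt_two_ne
  have hI := Complex.I_sq
  apply Subtype.ext
  change (onb a).1 * (onb (a + 1)).1 - (onb (a + 1)).1 * (onb a).1 = sc • (onb (a + 2)).1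
  ext i j
  fin_cases a <;> fin_cases i <;> fin_cases j <;>
    simp [onb, matE, matF, matH, sc] <;>
    field_simp <;> grind

lemma trForm_onb_succ (a : Fin 3) : trForm (onb a) (onb (a + 1)) = 0 := by
  fin_cases a <;>
    simp [trForm, onb, matE, matF, matH, Matrix.trace_fin_two]

lemma onb_span (A : ↥(sl (Fin 2) ℂ)) : ∃ c : Fin 3 → ℂ, A = ∑ a, c a • onb a := by
  have h2 := sqrt_two_sq
  have h0 := sqrt_two_ne
  have hI := Complex.I_sq
  have htr : A.1 0 0 + A.1 1 1 = 0 := by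
    have h : Matrix.trace A.1 = 0 := A.2
    rwa [Matrix.trace_fin_two] at h
  refine ⟨fun a => trForm A (onb a), Subtype.ext ?_⟩
  ext i j
  fin_cases i <;> fin_cases j <;>
    simp [Fin.sum_univ_three, trForm, onb, matE, matF, matH, Matrix.trace_fin_two,
      Matrix.mul_apply, Fin.sum_univ_two] <;>
    field_simp <;> grind

/-! ### The Sugawara operators of a single representation -/

section Sugawara

variable {V : Type*} [AddCommGroup V] [Module ℂ V]

lemma end_lie (f g : Module.End ℂ V) : ⁅f, g⁆ = f * g - g * f := rfl

namespace SmoothCurrentRep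

variable {k : ℂ} (R : SmoothCurrentRep k V)

/-- The modes `X_a(n)` of the orthonormal basis. -/
def J (a : Fin 3) (n : ℤ) : Module.End ℂ V := R.cur (onb a) n

/-- The `r`-th term `Σ_a :X_a(r) X_a(n - r):` of the series defining the Sugawara operator. -/
def normTerm (n r : ℤ) : Module.End ℂ V := ∑ a : Fin 3, nOrd R.cur (onb a) r (n - r)

/-- The same term without normal ordering. -/
def plainTerm (n r : ℤ) : Module.End ℂ V := ∑ a : Fin 3, R.J a r * R.J a (n - r)

lemma mul_self_comm (a : Fin 3) (m n : ℤ) :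
    R.J a m * R.J a n = R.J a n * R.J a m + (if m + n = 0 then (m : ℂ) * k else 0) • 1 := by
  have h := R.commutator (onb a) (onb a) m n
  have h0 : R.cur (0 : ↥(sl (Fin 2) ℂ)) (m + n) = 0 := by
    simpa using R.cur_smul 0 0 (m + n)
  rw [end_lie, lie_self, h0, zero_add, trForm_onb_self, mul_one, sub_eq_iff_eq_add'] at h
  exact h

lemma mul_succ_comm (a : Fin 3) (m n : ℤ) :
    R.J a m * R.J (a + 1) n = R.J (a + 1) n * R.J a m + sc • R.J (a + 2) (m + n) := by
  have h := R.commutator (onb a) (onb (a + 1)) m n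
  rw [end_lie, onb_lie, R.cur_smul, trForm_onb_succ, mul_zero, zero_mul, ite_self, zero_smul,
    add_zero, sub_eq_iff_eq_add'] at h
  exact h

lemma mul_succ_succ_comm (a : Fin 3) (m n : ℤ) :
    R.J (a + 2) m * R.J a n = R.J a n * R.J (a + 2) m + sc • R.J (a + 1) (m + n) := by
  have h := R.mul_succ_comm (a + 2) m n
  have h1 : a + 2 + 1 = a := (by decide : ∀ a : Fin 3, a + 2 + 1 = a) a
  have h2 : a + 2 + 2 = a + 1 := (by decide : ∀ a : Fin 3, a + 2 + 2 = a + 1) a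
  rwa [h1, h2] at h

lemma exists_bound (v : V) : ∃ N : ℤ, ∀ (a : Fin 3) (n : ℤ), N ≤ n → R.J a n v = 0 := by
  obtain ⟨N, hN⟩ := R.smooth v
  exact ⟨N, fun a n hn => hN _ n hn⟩

/-- Normal ordering changes each term by a scalar only. -/
lemma normTerm_eq (n r : ℤ) :
    R.normTerm n r = R.plainTerm n r - (if n = 0 then 3 * k * r * step r else 0) • 1 := by
  unfold normTerm plainTerm nOrd step
  rcases lt_or_ge r 0 with hr | hr
  · simp only [if_pos hr, if_neg (not_le.2 hr)]
    simp [J]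
  · simp only [if_neg (not_lt.2 hr), if_pos hr]
    have h : ∀ a, R.cur (onb a) (n - r) * R.cur (onb a) r
        = R.J a r * R.J a (n - r) - (if n = 0 then (r : ℂ) * k else 0) • 1 := by
      intro a
      rw [R.mul_self_comm]
      simp [J]
    rw [Finset.sum_congr rfl fun a _ => h a, Finset.sum_sub_distrib, Finset.sum_const]
    congr 1
    split_ifs
    · simp only [Finset.card_univ, Fintype.card_fin]
      module
    · simp

/-- Commutators do not see the normal ordering. -/
lemma lie_normTerm (T : Module.End ℂ V) (n r : ℤ) :
    ⁅R.normTerm n r, T⁆ = ⁅R.plainTerm n r, T⁆ := by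
  rw [R.normTerm_eq, end_lie, end_lie, sub_mul, mul_sub, smul_mul_assoc, mul_smul_comm, one_mul,
    mul_one]
  abel

lemma finSum_normTerm (n : ℤ) (v : V) :
    FinSum (fun r => R.normTerm n r v) (∑ᶠ r, R.normTerm n r v) := by
  obtain ⟨N, hN⟩ := R.exists_bound v
  refine FinSum.of_eq_zero ⟨min 0 (n - N), max 0 N, fun r hr => ?_⟩
  unfold normTerm nOrd
  rcases lt_or_ge r 0 with h | h
  · simp only [if_pos h, LinearMap.sum_apply, Module.End.mul_apply]
    exact Finset.sum_eq_zero fun a _ => by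
      rw [show R.cur (onb a) (n - r) v = 0 from hN a _ (by omega), map_zero]
  · simp only [if_neg (not_lt.2 h), LinearMap.sum_apply, Module.End.mul_apply]
    exact Finset.sum_eq_zero fun a _ => by
      rw [show R.cur (onb a) r v = 0 from hN a _ (by omega), map_zero]

/-- The cross terms arising in `[Σ_b X_b(r) X_b(n-r), X_a(p)]`, where `M = n + p`. -/
def cross (a : Fin 3) (M r : ℤ) : Module.End ℂ V :=
  R.J (a + 1) r * R.J (a + 2) (M - r) - R.J (a + 2) r * R.J (a + 1) (M - r)

/-- The cross terms minus their constant tail `2 s X_a(M)` for `r ≥ 0` (`s = sc`), which makes them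
vanish on any given vector for `|r|` large. -/
def crossReg (a : Fin 3) (M r : ℤ) : Module.End ℂ V :=
  R.cross a M r - (2 * sc * step r) • R.J a M

/-- Reversing the order of the two factors, which is what lets the cross terms be cut off at
large positive `r`. -/
lemma cross_reflect (a : Fin 3) (M r : ℤ) :
    R.cross a M r = (2 * sc) • R.J a M - R.cross a M (M - r) := by
  have h3 : a + 1 + 1 = a + 2 := by revert a; decide
  have h4 : a + 1 + 2 = a := by revert a; decide
  have h1 := R.mul_succ_comm (a + 1) r (M - r)
  have h2 := R.mul_succ_comm (a + 1) (M - r) r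
  rw [h3, h4, add_sub_cancel] at h1
  rw [h3, h4, sub_add_cancel] at h2
  unfold cross
  rw [sub_sub_cancel, h1, h2]
  module

lemma finSum_crossReg (a : Fin 3) (M : ℤ) (v : V) :
    FinSum (fun r => R.crossReg a M r v) (∑ᶠ r, R.crossReg a M r v) := by
  obtain ⟨N, hN⟩ := R.exists_bound v
  refine FinSum.of_eq_zero ⟨min 0 (M - N), max 0 N, fun r hr => ?_⟩
  unfold crossReg step
  rcases lt_or_ge r 0 with h | h
  · rw [if_neg (not_le.2 h), mul_zero, zero_smul, sub_zero]
    simp only [cross, LinearMap.sub_apply, Module.End.mul_apply]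
    rw [hN _ (M - r) (by omega), hN _ (M - r) (by omega), map_zero, map_zero, sub_zero]
  · rw [if_pos h, mul_one, cross_reflect, sub_sub_cancel_left]
    simp only [cross, LinearMap.neg_apply, LinearMap.sub_apply, Module.End.mul_apply,
      sub_sub_cancel]
    rw [hN _ r (by omega), hN _ r (by omega), map_zero, map_zero, sub_zero, neg_zero]

lemma sum_cycle {M : Type*} [AddCommGroup M] (f : Fin 3 → M) (a : Fin 3) :
    ∑ b, f b = f a + f (a + 1) + f (a + 2) := by
  rw [Fin.sum_univ_three]
  fin_cases a <;> simp <;> first | rfl | abel_nf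

/-- The commutator of a term with a current is a shift difference of cross terms plus central
contributions from two values of `r`.  The cross terms are not finitely supported in `r`; writing
them through `crossReg` makes the shift difference sum to zero and leaves a difference of step
functions, which supplies the shift `2` (the dual Coxeter number) of the level. -/
lemma lie_plainTerm_J (n r p : ℤ) (a : Fin 3) :
    ⁅R.plainTerm n r, R.J a p⁆ =
      sc • (R.cross a (n + p) (r + p) - R.cross a (n + p) r)
      + (if r = n + p then -(p : ℂ) * k else 0) • R.J a (n + p)
      + (if r = -p then -(p : ℂ) * k else 0) • R.J a (n + p) := by
  have e1 : R.J a r * R.J a (n - r) * R.J a p = R.J a p * (R.J a r * R.J a (n - r))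
      + (if r = n + p then -(p : ℂ) * k else 0) • R.J a (n + p)
      + (if r = -p then -(p : ℂ) * k else 0) • R.J a (n + p) := by
    have c1 : (if n - r + p = 0 then ((n - r : ℤ) : ℂ) * k else 0) • R.J a r
        = (if r = n + p then -(p : ℂ) * k else 0) • R.J a (n + p) := by
      by_cases h : r = n + p
      · subst h; simp
      · rw [if_neg (by omega), if_neg h, zero_smul, zero_smul]
    have c2 : (if r + p = 0 then (r : ℂ) * k else 0) • R.J a (n - r)
        = (if r = -p then -(p : ℂ) * k else 0) • R.J a (n + p) := by
      by_cases h : r = -p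
      · subst h; simp
      · rw [if_neg (by omega), if_neg h, zero_smul, zero_smul]
    rw [mul_assoc, R.mul_self_comm a (n - r) p, mul_add, ← mul_assoc, R.mul_self_comm a r p,
      ← c1, ← c2]
    simp only [add_mul, mul_smul_comm, smul_mul_assoc, mul_one, one_mul, mul_assoc]
    abel
  have e2 : R.J (a + 1) r * R.J (a + 1) (n - r) * R.J a p
      = R.J a p * (R.J (a + 1) r * R.J (a + 1) (n - r))
        - sc • (R.J (a + 1) r * R.J (a + 2) (n + p - r))
        - sc • (R.J (a + 2) (r + p) * R.J (a + 1) (n - r)) := by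
    have h : ∀ q, R.J (a + 1) q * R.J a p = R.J a p * R.J (a + 1) q - sc • R.J (a + 2) (q + p) := by
      intro q
      rw [R.mul_succ_comm a p q, add_comm p q]; abel
    rw [mul_assoc, h, mul_sub, ← mul_assoc, h, show n - r + p = n + p - r by ring]
    simp only [sub_mul, mul_smul_comm, smul_mul_assoc, mul_assoc]
    abel
  have e3 : R.J (a + 2) r * R.J (a + 2) (n - r) * R.J a p
      = R.J a p * (R.J (a + 2) r * R.J (a + 2) (n - r))
        + sc • (R.J (a + 2) r * R.J (a + 1) (n + p - r))
        + sc • (R.J (a + 1) (r + p) * R.J (a + 2) (n - r)) := by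
    rw [mul_assoc, R.mul_succ_succ_comm a (n - r) p, mul_add, ← mul_assoc,
      R.mul_succ_succ_comm a r p, show n - r + p = n + p - r by ring]
    simp only [add_mul, mul_smul_comm, smul_mul_assoc, mul_assoc]
    abel
  unfold plainTerm cross
  rw [sum_cycle _ a, end_lie, add_mul, add_mul, e1, e2, e3, mul_add, mul_add,
    show n + p - (r + p) = n - r by ring]
  module

end SmoothCurrentRep

open SmoothCurrentRep

variable {k : ℂ} (R : SmoothCurrentRep k V) {L : ℤ → Module.End ℂ V}

/-- Commutators with a Sugawara operator may be computed term by term. -/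
lemma IsSugawara.lie_apply (hL : IsSugawara k R.cur L) (n : ℤ) (T : Module.End ℂ V) {v s : V}
    (h : FinSum (fun r => ⁅R.normTerm n r, T⁆ v) s) : ⁅L n, T⁆ v = (2 * (k + 2))⁻¹ • s := by
  have h1 := R.finSum_normTerm n (T v)
  have h2 := (R.finSum_normTerm n v).map T.toAddMonoidHom
  have h3 := h1.sub h2
  have h4 : s = _ := h.2.symm.trans h3.2
  rw [h4, smul_sub]
  have a1 : L n (T v) = _ := hL n (T v)
  have a2 : L n v = _ := hL n v
  rw [end_lie, LinearMap.sub_apply, Module.End.mul_apply, Module.End.mul_apply, a1, a2, map_smul]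
  rfl

/-- The currents are primary of weight one: `[L_n, X(p)] = -p X(n+p)`. -/
lemma IsSugawara.lie_J (hk : k ≠ -2) (hL : IsSugawara k R.cur L) (n p : ℤ) (a : Fin 3) :
    ⁅L n, R.J a p⁆ = (-(p : ℂ)) • R.J a (n + p) := by
  ext v
  set w := R.J a (n + p) v with hw
  have F1 := R.finSum_crossReg a (n + p) v
  have F2 := ((F1.shift p).sub F1).smul sc
  -- The correction left over after the regularized cross terms cancel.
  have F3 := FinSum.step_diff (h := fun _ => 2 * sc * sc) (P := fun r => 2 * sc * sc * r)
    (fun r => by push_cast; ring) p w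
  have F4 := FinSum.single (n + p) (fun _ => (-(p : ℂ) * k) • w)
  have F5 := FinSum.single (-p) (fun _ => (-(p : ℂ) * k) • w)
  have F := ((F2.add F3).add F4).add F5
  rw [hL.lie_apply R n _ (F.congr' (fun r => ?_) rfl)]
  · rw [sub_self, smul_zero, zero_add, mul_assoc 2 sc, sc_sq, LinearMap.smul_apply, ← hw]
    have hk' : k + 2 ≠ 0 := fun h => hk (eq_neg_of_add_eq_zero_left h)
    simp only [← add_smul, smul_smul]
    congr 1
    push_cast
    field_simp
    ring
  · rw [R.lie_normTerm, R.lie_plainTerm_J]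
    simp only [crossReg, LinearMap.add_apply, LinearMap.smul_apply, LinearMap.sub_apply, ← hw]
    simp only [ite_smul, zero_smul]
    module

lemma IsSugawara.lie_cur (hk : k ≠ -2) (hL : IsSugawara k R.cur L) (n p : ℤ)
    (A : ↥(sl (Fin 2) ℂ)) : ⁅L n, R.cur A p⁆ = (-(p : ℂ)) • R.cur A (n + p) := by
  obtain ⟨c, rfl⟩ := onb_span A
  have h : ∀ q, R.cur (∑ a, c a • onb a) q = ∑ a, c a • R.J a q := by
    intro q
    simp only [Fin.sum_univ_three, R.cur_add, R.cur_smul, J]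
  have h' : ∀ a, L n * R.J a p = R.J a p * L n + (-(p : ℂ)) • R.J a (n + p) := fun a => by
    rw [← sub_eq_iff_eq_add', ← end_lie, hL.lie_J R hk]
  rw [h, h, end_lie, Finset.mul_sum, Finset.sum_mul, Finset.smul_sum, ← Finset.sum_sub_distrib]
  refine Finset.sum_congr rfl fun a _ => ?_
  rw [mul_smul_comm, smul_mul_assoc, h' a]
  module

/-- An operator commuting with all currents commutes with the Sugawara operators. -/
lemma IsSugawara.lie_eq_zero (hL : IsSugawara k R.cur L) (T : Module.End ℂ V)
    (hT : ∀ A n, ⁅T, R.cur A n⁆ = 0) (n : ℤ) : ⁅L n, T⁆ = 0 := by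
  have hT' : ∀ a n, R.J a n * T = T * R.J a n := fun a n => (sub_eq_zero.1 (hT (onb a) n)).symm
  ext v
  have F : FinSum (fun _ : ℤ => (0 : V)) 0 := ⟨by simp, by simp⟩
  rw [hL.lie_apply R n T (F.congr' (fun r => ?_) rfl), smul_zero, LinearMap.zero_apply]
  rw [R.lie_normTerm, plainTerm, end_lie, Finset.sum_mul, Finset.mul_sum,
    Finset.sum_congr rfl fun a _ => show R.J a r * R.J a (n - r) * T
      = T * (R.J a r * R.J a (n - r)) by rw [mul_assoc, hT', ← mul_assoc, hT', mul_assoc],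
    sub_self, LinearMap.zero_apply]

lemma IsSugawara.lie_plainTerm (hk : k ≠ -2) (hL : IsSugawara k R.cur L) (m n r : ℤ) :
    ⁅L m, R.plainTerm n r⁆ = (-(r : ℂ)) • R.plainTerm (m + n) (r + m)
      + ((r : ℂ) - n) • R.plainTerm (m + n) r := by
  have h : ∀ a p, L m * R.J a p = R.J a p * L m + (-(p : ℂ)) • R.J a (m + p) := fun a p => by
    rw [← sub_eq_iff_eq_add', ← end_lie, hL.lie_J R hk]
  unfold plainTerm
  rw [end_lie, Finset.mul_sum, Finset.sum_mul, Finset.smul_sum, Finset.smul_sum,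
    ← Finset.sum_sub_distrib, ← Finset.sum_add_distrib]
  refine Finset.sum_congr rfl fun a _ => ?_
  rw [← mul_assoc, h, add_mul, mul_assoc, h, mul_add, show m + n - (r + m) = n - r by ring,
    show m + n - r = m + (n - r) by ring, add_comm r m]
  simp only [mul_smul_comm, smul_mul_assoc, mul_assoc]
  push_cast
  module

/-- The Sugawara operators satisfy the Virasoro relations with central charge `3k/(k+2)`. -/
lemma IsSugawara.virasoro (hk : k ≠ -2) (hL : IsSugawara k R.cur L) (m n : ℤ) :
    ⁅L m, L n⁆ = ((m : ℂ) - n) • L (m + n)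
      + (if m + n = 0 then ((m : ℂ) ^ 3 - m) / 12 * (3 * k / (k + 2)) else 0) • 1 := by
  have hk' : k + 2 ≠ 0 := fun h => hk (eq_neg_of_add_eq_zero_left h)
  ext v
  -- `IsSugawara.lie_apply` expands the left entry of a bracket; here `L n` is the one expanded.
  have hskew : ⁅L m, L n⁆ = -⁅L n, L m⁆ := by simp only [end_lie]; abel
  have F0 := R.finSum_normTerm (m + n) v
  set s := ∑ᶠ r, R.normTerm (m + n) r v with hs
  -- A weighted sum of normal ordered terms; only its finiteness matters before the shift.
  have W : ∀ c : ℤ → ℂ, ∃ t, FinSum (fun r => c r • R.normTerm (m + n) r v) t := fun c =>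
    ⟨_, F0.1.subset fun r hr h0 => hr (by
      change c r • R.normTerm (m + n) r v = 0
      rw [show R.normTerm (m + n) r v = 0 from h0, smul_zero]), rfl⟩
  obtain ⟨t, ht⟩ := W fun r => (m : ℂ) - r
  have F1 := ht.shift m
  have F2 := (F0.smul ((m : ℂ) - n)).sub ht
  -- The anomaly: undoing the normal ordering on both sides leaves `r (r + m)` against a difference
  -- of steps, and `P` is a discrete primitive of it with `P 0 - P (-m) = -(m³ - m)/6`.
  have F3 := FinSum.step_diff (h := fun r => (r : ℂ) * (r + m))
    (P := fun r => ((r : ℂ) - 1) * r * (2 * r - 1) / 6 + m * (r * (r - 1) / 2))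
    (fun r => by push_cast; ring) m (if m + n = 0 then (3 * k) • v else 0)
  have F := (F3.sub (F1.add F2))
  rw [hskew, LinearMap.neg_apply, hL.lie_apply R n (L m) (F.congr' (fun r => ?_) rfl)]
  · rw [LinearMap.add_apply, LinearMap.smul_apply,
      LinearMap.smul_apply, Module.End.one_apply]
    have a2 : L (m + n) v = (2 * (k + 2))⁻¹ • s := hL (m + n) v
    rw [a2]
    split_ifs
    · push_cast
      match_scalars <;> field_simp <;> ring
    · push_cast
      module
  · have hl : ⁅R.normTerm n r, L m⁆ = -⁅L m, R.plainTerm n r⁆ := by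
      rw [R.lie_normTerm]; simp only [end_lie]; abel
    have hp : ∀ q, R.plainTerm (m + n) q = R.normTerm (m + n) q
        + (if m + n = 0 then 3 * k * q * step q else 0) • 1 := fun q => by
      rw [R.normTerm_eq]; abel
    rw [hl, hL.lie_plainTerm R hk, hp, hp]
    simp only [LinearMap.add_apply, LinearMap.smul_apply, LinearMap.neg_apply,
      Module.End.one_apply]
    split_ifs with h0
    · have hn : (n : ℂ) = -m := by
        rw [show n = -m by omega]; push_cast; ring
      rw [hn]
      push_cast
      module
    · push_cast
      module

end Sugawara

/-! ### The diagonal representation on the tensor product -/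

section Diagonal

variable {V W : Type*} [AddCommGroup V] [Module ℂ V] [AddCommGroup W] [Module ℂ W]

/-- Operators `f ⊗ 1 + 1 ⊗ g` bracket componentwise. -/
lemma lie_rTensor_add_lTensor (f f' : Module.End ℂ V) (g g' : Module.End ℂ W) :
    ⁅LinearMap.rTensor W f + LinearMap.lTensor V g,
      LinearMap.rTensor W f' + LinearMap.lTensor V g'⁆
      = LinearMap.rTensor W ⁅f, f'⁆ + LinearMap.lTensor V ⁅g, g'⁆ := by
  ext v w
  simp [end_lie]
  abel

/-- The diagonal current representation `X(n) ⊗ 1 + 1 ⊗ X(n)`; the levels add. -/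
def SmoothCurrentRep.diag {k l : ℂ} (R : SmoothCurrentRep k V) (S : SmoothCurrentRep l W) :
    SmoothCurrentRep (k + l) (TensorProduct ℂ V W) where
  cur A n := LinearMap.rTensor W (R.cur A n) + LinearMap.lTensor V (S.cur A n)
  cur_add A B n := by
    rw [R.cur_add, S.cur_add, LinearMap.rTensor_add, LinearMap.lTensor_add]; abel
  cur_smul c A n := by
    rw [R.cur_smul, S.cur_smul, LinearMap.rTensor_smul, LinearMap.lTensor_smul, smul_add]
  commutator A B m n := by
    rw [lie_rTensor_add_lTensor, R.commutator, S.commutator]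
    simp only [LinearMap.rTensor_add, LinearMap.lTensor_add, LinearMap.rTensor_smul,
      LinearMap.lTensor_smul, Module.End.one_eq_id, LinearMap.rTensor_id, LinearMap.lTensor_id]
    split_ifs <;> module
  smooth x := by
    induction x with
    | zero => exact ⟨0, fun A n _ => map_zero _⟩
    | tmul v w =>
      obtain ⟨N, hN⟩ := R.smooth v
      obtain ⟨M, hM⟩ := S.smooth w
      refine ⟨max N M, fun A n hn => ?_⟩
      rw [LinearMap.add_apply, LinearMap.rTensor_tmul, LinearMap.lTensor_tmul,
        hN A n (by omega), hM A n (by omega), TensorProduct.zero_tmul, TensorProduct.tmul_zero,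
        add_zero]
    | add x y hx hy =>
      obtain ⟨N, hN⟩ := hx
      obtain ⟨M, hM⟩ := hy
      refine ⟨max N M, fun A n hn => ?_⟩
      rw [map_add, hN A n (by omega), hM A n (by omega), add_zero]

end Diagonal

/-! ### The coset operators -/

open TensorProduct in
/-!
STATEMENT 9: Let `k ∉ {−2, −3}`, let `V` carry a smooth sl₂-current
representation of level `k` and `W` one of level `1`.  The diagonal operators
`X^d(n) = X(n) ⊗ Id + Id ⊗ X(n)` form a smooth sl₂-current representation of
level `k+1` on `V ⊗ W`.  With `L^{(k)}, L^{(1)}, L^{(k+1)}` the Sugawara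
operators of the three actions and `K n = L^{(k)}_n ⊗ Id + Id ⊗ L^{(1)}_n − L^{(k+1)}_n`,
(i) `[K m, X^d(n)] = 0` for all `X`, `m`, `n`; and (ii) the `K n` satisfy the
Virasoro relations with central charge `1 − 6/((k+2)(k+3))`.
-/

theorem coset_virasoro_operators
    (k : ℂ) (hk2 : k ≠ -2) (hk3 : k ≠ -3)
    (V W : Type*) [AddCommGroup V] [Module ℂ V] [AddCommGroup W] [Module ℂ W]
    (R : SmoothCurrentRep k V) (S : SmoothCurrentRep 1 W)
    (Dcur : ↥(sl (Fin 2) ℂ) → ℤ → Module.End ℂ (TensorProduct ℂ V W))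
    (hD : ∀ (A : ↥(sl (Fin 2) ℂ)) (n : ℤ),
      Dcur A n = LinearMap.rTensor W (R.cur A n) + LinearMap.lTensor V (S.cur A n))
    (Lk : ℤ → Module.End ℂ V) (hLk : IsSugawara k R.cur Lk)
    (L1 : ℤ → Module.End ℂ W) (hL1 : IsSugawara 1 S.cur L1)
    (Lk1 : ℤ → Module.End ℂ (TensorProduct ℂ V W)) (hLk1 : IsSugawara (k + 1) Dcur Lk1)
    (K : ℤ → Module.End ℂ (TensorProduct ℂ V W))
    (hK : ∀ n : ℤ,
      K n = LinearMap.rTensor W (Lk n) + LinearMap.lTensor V (L1 n) - Lk1 n) :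
    -- the diagonal operators form a smooth current representation of level k+1
    (∃ D : SmoothCurrentRep (k + 1) (TensorProduct ℂ V W), D.cur = Dcur) ∧
    -- (i) the coset operators commute with the diagonal currents
    (∀ (A : ↥(sl (Fin 2) ℂ)) (m n : ℤ), ⁅K m, Dcur A n⁆ = 0) ∧
    -- (ii) the coset operators satisfy the Virasoro relations with the coset central charge
    (∀ m n : ℤ, ⁅K m, K n⁆ = ((m : ℂ) - (n : ℂ)) • K (m + n)
      + (if m + n = 0 then
            (((m : ℂ) ^ 3 - (m : ℂ)) / 12) * (1 - 6 / ((k + 2) * (k + 3)))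
          else 0) • (1 : Module.End ℂ (TensorProduct ℂ V W))) := by
  have hk3' : k + 1 ≠ -2 := fun h => hk3 (by linear_combination h)
  have a2 : k + 2 ≠ 0 := fun h => hk2 (by linear_combination h)
  have a3 : k + 3 ≠ 0 := fun h => hk3 (by linear_combination h)
  obtain rfl : Dcur = (R.diag S).cur := funext fun A => funext fun n => hD A n
  set D := R.diag S with hDdef
  -- `T n` is the total Virasoro operator of the two factors.
  set T : ℤ → Module.End ℂ (TensorProduct ℂ V W) :=
    fun n => LinearMap.rTensor W (Lk n) + LinearMap.lTensor V (L1 n) with hT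
  have hK' : ∀ n, K n = T n - Lk1 n := hK
  have hTD : ∀ A m n, ⁅T m, D.cur A n⁆ = (-(n : ℂ)) • D.cur A (m + n) := by
    intro A m n
    rw [hD, hD, hT, lie_rTensor_add_lTensor, hLk.lie_cur R hk2, hL1.lie_cur S (by norm_num),
      LinearMap.rTensor_smul, LinearMap.lTensor_smul, smul_add]
  have hKD : ∀ A m n, ⁅K m, D.cur A n⁆ = 0 := by
    intro A m n
    have h1 := hTD A m n
    have h2 := hLk1.lie_cur D hk3' m n A
    rw [← sub_eq_zero.2 (h1.trans h2.symm), hK']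
    simp only [end_lie, sub_mul, mul_sub]
    abel
  refine ⟨⟨D, rfl⟩, hKD, fun m n => ?_⟩
  have c1 : ∀ m n, ⁅Lk1 n, K m⁆ = 0 := fun m n =>
    hLk1.lie_eq_zero D (K m) (fun A n => hKD A m n) n
  have hTT : ⁅T m, T n⁆ = ((m : ℂ) - n) • T (m + n) + (if m + n = 0 then
      ((m : ℂ) ^ 3 - m) / 12 * (3 * k / (k + 2)) + ((m : ℂ) ^ 3 - m) / 12 * (3 * 1 / (1 + 2))
      else 0) • 1 := by
    rw [hT, lie_rTensor_add_lTensor, hLk.virasoro R hk2, hL1.virasoro S (by norm_num)]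
    simp only [LinearMap.rTensor_add, LinearMap.lTensor_add, LinearMap.rTensor_smul,
      LinearMap.lTensor_smul, Module.End.one_eq_id, LinearMap.rTensor_id, LinearMap.lTensor_id]
    split_ifs <;> module
  have hLL := hLk1.virasoro D hk3' m n
  -- Since the `K`'s commute with the `Lk1`'s, `[T, T] = [K, K] + [Lk1, Lk1]`.
  have split : ⁅K m, K n⁆ = ⁅T m, T n⁆ - ⁅Lk1 m, Lk1 n⁆ := by
    have h1 := c1 m n
    have h2 := c1 n m
    have t : ∀ j, T j = K j + Lk1 j := fun j => by rw [hK']; abel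
    rw [t, t]
    calc ⁅K m, K n⁆ = ⁅K m, K n⁆ - ⁅Lk1 n, K m⁆ + ⁅Lk1 m, K n⁆ := by rw [h1, h2]; abel
      _ = _ := by simp only [end_lie, add_mul, mul_add]; abel
  rw [split, hTT, hLL, hK']
  split_ifs
  · have hc : 3 * k / (k + 2) + 3 * 1 / (1 + 2) - 3 * (k + 1) / (k + 1 + 2)
        = 1 - 6 / ((k + 2) * (k + 3)) := by
      rw [show k + 1 + 2 = k + 3 by ring]
      field_simp
      ring
    rw [← hc]
    module
  · module

end
end
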